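/- (Local filtering enhancement of the realignment criterion) Let L^A ∈ L(H_A) and L^B ∈ L(H_B) be linear operators such that ‖L^A σ^A (L^A)†‖_HS ≤ 1 for every density operator σ^A on H_A and ‖L^B σ^B (L^B)†‖_HS ≤ 1 for every density operator σ^B on H_B. Then for every separable state ρ on H_A ⊗ H_B: ‖(L^A ⊗ L^B) ρ (L^A ⊗ L^B)†‖_CCN ≤ 1. -/

import Mathlib

open scoped Kronecker ComplexOrder
open Matrix Finset

/-- Hilbert-Schmidt inner product on matrices. -/
noncomputable def hsInner {n : Type*} [Fintype n] (A B : Matrix n n ℂ) : ℂ :=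
  (Aᴴ * B).trace

/-- Hilbert-Schmidt norm. -/
noncomputable def hsNorm {n : Type*} [Fintype n] (A : Matrix n n ℂ) : ℝ :=
  Real.sqrt (hsInner A A).re

/-- A density operator: positive semidefinite with unit trace. -/
def IsDensity {n : Type*} [Fintype n] (ρ : Matrix n n ℂ) : Prop :=
  ρ.PosSemidef ∧ ρ.trace = 1

/-- A separable bipartite state: a convex combination of product density operators. -/
def IsSeparableState {NA NB : ℕ} (ρ : Matrix (Fin NA × Fin NB) (Fin NA × Fin NB) ℂ) : Prop :=
  ∃ (m : ℕ) (p : Fin m → ℝ)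
    (ρA : Fin m → Matrix (Fin NA) (Fin NA) ℂ) (ρB : Fin m → Matrix (Fin NB) (Fin NB) ℂ),
    (∀ i, 0 < p i) ∧ (∑ i, p i = 1) ∧ (∀ i, IsDensity (ρA i)) ∧ (∀ i, IsDensity (ρB i)) ∧
    ρ = ∑ i, (p i : ℂ) • (ρA i ⊗ₖ ρB i)

/-- The computable cross norm (CCN) on bipartite operators. -/
noncomputable def ccn {NA NB : ℕ} (C : Matrix (Fin NA × Fin NB) (Fin NA × Fin NB) ℂ) : ℝ :=
  sInf { r : ℝ | ∃ (n : ℕ) (A : Fin n → Matrix (Fin NA) (Fin NA) ℂ)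
    (B : Fin n → Matrix (Fin NB) (Fin NB) ℂ),
    C = ∑ k, A k ⊗ₖ B k ∧ r = ∑ k, hsNorm (A k) * hsNorm (B k) }

theorem hsNorm_nonneg {n : Type*} [Fintype n] (A : Matrix n n ℂ) : 0 ≤ hsNorm A :=
  Real.sqrt_nonneg _

theorem hsNorm_smul {n : Type*} [Fintype n] (c : ℂ) (A : Matrix n n ℂ) :
    hsNorm (c • A) = ‖c‖ * hsNorm A := by
  have hsInner_smul_smul : hsInner (c • A) (c • A) = ((‖c‖ ^ 2 : ℝ) : ℂ) * hsInner A A := by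
    simp only [hsInner, conjTranspose_smul, Matrix.smul_mul, Matrix.mul_smul, trace_smul,
      smul_eq_mul, ← mul_assoc, Complex.star_def, Complex.mul_conj', Complex.ofReal_pow]
  rw [hsNorm, hsInner_smul_smul, Complex.re_ofReal_mul, Real.sqrt_mul (sq_nonneg _),
    Real.sqrt_sq (norm_nonneg c), hsNorm]

theorem kronecker_mul_kronecker_mul_conjTranspose {R l m n p : Type*} [CommSemiring R] [StarRing R]
    [Fintype m] [Fintype p] (K : Matrix l m R) (L : Matrix n p R)
    (A : Matrix m m R) (B : Matrix p p R) :
    (K ⊗ₖ L) * (A ⊗ₖ B) * (K ⊗ₖ L)ᴴ = (K * A * Kᴴ) ⊗ₖ (L * B * Lᴴ) := by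
  rw [conjTranspose_kronecker, ← mul_kronecker_mul, ← mul_kronecker_mul]

section ComputableCrossNorm

variable {NA NB : ℕ} {ι : Type*} [Fintype ι]

theorem ccn_sum_kronecker_le (A : ι → Matrix (Fin NA) (Fin NA) ℂ)
    (B : ι → Matrix (Fin NB) (Fin NB) ℂ) :
    ccn (∑ i, A i ⊗ₖ B i) ≤ ∑ i, hsNorm (A i) * hsNorm (B i) := by
  let e := (Fintype.equivFin ι).symm
  refine csInf_le ⟨0, ?_⟩ ⟨Fintype.card ι, A ∘ e, B ∘ e, ?_, ?_⟩
  · rintro _ ⟨n, A', B', -, rfl⟩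
    exact sum_nonneg fun k _ => mul_nonneg (hsNorm_nonneg _) (hsNorm_nonneg _)
  · exact (e.sum_comp fun i => A i ⊗ₖ B i).symm
  · exact (e.sum_comp fun i => hsNorm (A i) * hsNorm (B i)).symm

theorem ccn_convexCombination_kronecker_le {p : ι → ℝ} (hp : ∀ i, 0 ≤ p i) (hp_sum : ∑ i, p i = 1)
    {A : ι → Matrix (Fin NA) (Fin NA) ℂ} {B : ι → Matrix (Fin NB) (Fin NB) ℂ} {a b : ℝ}
    (hA : ∀ i, hsNorm (A i) ≤ a) (hB : ∀ i, hsNorm (B i) ≤ b) :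
    ccn (∑ i, (p i : ℂ) • (A i ⊗ₖ B i)) ≤ a * b := by
  have product_le (i : ι) : hsNorm (A i) * hsNorm (B i) ≤ a * b :=
    mul_le_mul (hA i) (hB i) (hsNorm_nonneg _) ((hsNorm_nonneg _).trans (hA i))
  calc ccn (∑ i, (p i : ℂ) • (A i ⊗ₖ B i))
      = ccn (∑ i, ((p i : ℂ) • A i) ⊗ₖ B i) := by simp only [smul_kronecker]
    _ ≤ ∑ i, hsNorm ((p i : ℂ) • A i) * hsNorm (B i) := ccn_sum_kronecker_le _ _
    _ = ∑ i, p i * (hsNorm (A i) * hsNorm (B i)) := by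
      simp only [hsNorm_smul, Complex.norm_of_nonneg (hp _), mul_assoc]
    _ ≤ ∑ i, p i * (a * b) :=
      sum_le_sum fun i _ => mul_le_mul_of_nonneg_left (product_le i) (hp i)
    _ = a * b := by rw [← sum_mul, hp_sum, one_mul]

end ComputableCrossNorm

theorem stmt18_local_filtering_general {MA MB NA NB : ℕ}
    (LA : Matrix (Fin MA) (Fin NA) ℂ) (LB : Matrix (Fin MB) (Fin NB) ℂ) {a b : ℝ}
    (hLA : ∀ σA : Matrix (Fin NA) (Fin NA) ℂ, IsDensity σA → hsNorm (LA * σA * LAᴴ) ≤ a)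
    (hLB : ∀ σB : Matrix (Fin NB) (Fin NB) ℂ, IsDensity σB → hsNorm (LB * σB * LBᴴ) ≤ b)
    {ρ : Matrix (Fin NA × Fin NB) (Fin NA × Fin NB) ℂ} (hsep : IsSeparableState ρ) :
    ccn ((LA ⊗ₖ LB) * ρ * (LA ⊗ₖ LB)ᴴ) ≤ a * b := by
  obtain ⟨m, p, ρA, ρB, hp, hp_sum, hρA, hρB, rfl⟩ := hsep
  have filtered_eq : (LA ⊗ₖ LB) * (∑ i, (p i : ℂ) • (ρA i ⊗ₖ ρB i)) * (LA ⊗ₖ LB)ᴴ =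
      ∑ i, (p i : ℂ) • ((LA * ρA i * LAᴴ) ⊗ₖ (LB * ρB i * LBᴴ)) := by
    simp only [Matrix.mul_sum, Matrix.sum_mul, Matrix.mul_smul, Matrix.smul_mul,
      kronecker_mul_kronecker_mul_conjTranspose]
  rw [filtered_eq]
  exact ccn_convexCombination_kronecker_le (fun i => (hp i).le) hp_sum
    (fun i => hLA _ (hρA i)) (fun i => hLB _ (hρB i))

/-- Local filtering enhancement of the realignment criterion. -/
theorem stmt18_local_filtering {NA NB : ℕ} (hA : 2 ≤ NA) (hB : 2 ≤ NB)
    (LA : Matrix (Fin NA) (Fin NA) ℂ) (LB : Matrix (Fin NB) (Fin NB) ℂ)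
    (hLA : ∀ σA : Matrix (Fin NA) (Fin NA) ℂ, IsDensity σA → hsNorm (LA * σA * LAᴴ) ≤ 1)
    (hLB : ∀ σB : Matrix (Fin NB) (Fin NB) ℂ, IsDensity σB → hsNorm (LB * σB * LBᴴ) ≤ 1)
    (ρ : Matrix (Fin NA × Fin NB) (Fin NA × Fin NB) ℂ)
    (hsep : IsSeparableState ρ) :
    ccn ((LA ⊗ₖ LB) * ρ * (LA ⊗ₖ LB)ᴴ) ≤ 1 := by
  simpa only [mul_one] using stmt18_local_filtering_general LA LB hLA hLB hsep
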